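/- arXiv:1608.08814 — 9 statements merged into one kernel-verified Lean document; each statement's English description precedes it below -/
import Mathlib

section
/- Let N ≥ 1, ε > 0, and let f : ℝ → ℝ be convex with f(1) = 0 and f(0) ≤ f((1+ε)N). Let p = (p_1,…,p_N) have nonnegative entries with total mass ∑_{i=1}^N p_i ≤ 1 + ε. Then D_f(p‖u) = (1/N) ∑_{i=1}^N f(N p_i) ≤ (f((1+ε)N) + (N−1) f(0)) / N =: U_f(N, ε). -/
/-!
On `[0, (1+ε)N]` the convex function `f` lies below its chord. Evaluating the chord at each `N pᵢ`
and summing gives a bound that is affine in the total mass, with slope of the sign of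
`f((1+ε)N) - f(0) ≥ 0`, so it is largest when the mass equals `1 + ε`.
-/

open Finset

/-- For a nonnegative vector `p` with total mass at most `1 + ε` and the uniform vector
`u = (1/N,…,1/N)`, the generalized `f`-divergence `D_f(p‖u) = (1/N) ∑ f(N p_i)` is at most
`U_f(N, ε) := (f((1+ε)N) + (N-1) f(0)) / N`. -/
theorem f_divergence_uniform_bound_mass (N : ℕ) (hN : 1 ≤ N) (ε : ℝ) (hε : 0 < ε)
    (f : ℝ → ℝ) (hf : ConvexOn ℝ Set.univ f) (hf1 : f 1 = 0)
    (hf0 : f 0 ≤ f ((1 + ε) * N))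
    (p : Fin N → ℝ) (hp : ∀ i, 0 ≤ p i) (hsum : ∑ i, p i ≤ 1 + ε) :
    (1 / (N : ℝ)) * ∑ i, f ((N : ℝ) * p i) ≤ (f ((1 + ε) * N) + ((N : ℝ) - 1) * f 0) / N := by
  have hε1 : 0 < 1 + ε := by linarith
  have hN0 : (0 : ℝ) < N := by exact_mod_cast hN
  -- Each `N pᵢ` is the convex combination of `0` and `(1+ε)N` with weight `pᵢ/(1+ε)` on the latter.
  have hchord : ∀ i, f ((N : ℝ) * p i) ≤
      f 0 + p i / (1 + ε) * (f ((1 + ε) * N) - f 0) := by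
    intro i
    have hle : p i ≤ 1 + ε :=
      (Finset.single_le_sum (fun j _ => hp j) (Finset.mem_univ i)).trans hsum
    have ht0 : 0 ≤ p i / (1 + ε) := div_nonneg (hp i) hε1.le
    have ht1 : p i / (1 + ε) ≤ 1 := (div_le_one hε1).2 hle
    have h := hf.2 (Set.mem_univ 0) (Set.mem_univ ((1 + ε) * (N : ℝ)))
      (sub_nonneg.2 ht1) ht0 (by ring)
    have he : (1 - p i / (1 + ε)) • (0 : ℝ) + (p i / (1 + ε)) • ((1 + ε) * (N : ℝ))
        = (N : ℝ) * p i := by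
      simp only [smul_eq_mul]
      field_simp
      ring
    rw [he] at h
    simp only [smul_eq_mul] at h
    linarith
  have hS : ∑ i, f ((N : ℝ) * p i) ≤
      N * f 0 + (∑ i, p i) / (1 + ε) * (f ((1 + ε) * N) - f 0) := by
    refine (Finset.sum_le_sum fun i _ => hchord i).trans (le_of_eq ?_)
    rw [Finset.sum_add_distrib, ← Finset.sum_mul, ← Finset.sum_div]
    simp
  -- The total weight is at most `1`, and its coefficient is nonnegative by `hf0`.
  have hT : (∑ i, p i) / (1 + ε) * (f ((1 + ε) * N) - f 0) ≤ f ((1 + ε) * N) - f 0 :=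
    mul_le_of_le_one_left (sub_nonneg.2 hf0) ((div_le_one hε1).2 hsum)
  rw [one_div, inv_mul_eq_div]
  gcongr
  linarith
end

section
/- Let N ≥ 1 and ε > 0 with (1+ε)N ≥ 4, and let p = (p_1,…,p_N) have nonnegative entries with ∑_{i=1}^N p_i ≤ 1 + ε. Then ∑_{i=1}^N (√p_i − 1/√N)² ≤ 2(1 − √((1+ε)/N) + ε/2). -/
open Finset

/-! Put `a = 1/√N`, `P = ∑ p_i`, `M = 1 + ε`. Expanding the square gives
`∑ (√p_i − a)² = P − 2a ∑ √p_i + 1`. By subadditivity of the square root `∑ √p_i ≥ √P`, so the sum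
is at most `g(√P)` with `g(x) = x² − 2ax + 1` (all mass on one coordinate), while the claimed bound
is `g(√M)`. Finally `g(√M) − g(x) = (√M − x)(√M + x − 2a) ≥ 0` for `0 ≤ x ≤ √M`, because
`M N ≥ 4` says exactly that `√M ≥ 2a`. -/

/-- Squared Hellinger instance of the generalized `f`-divergence bound:
`D_Hell²(p, u) = ∑ (√p_i − 1/√N)² ≤ 2(1 − √((1+ε)/N) + ε/2)` for nonnegative `p`
with mass `≤ 1+ε`, provided `(1+ε)N ≥ 4`. -/
theorem hellinger_sq_uniform_bound (N : ℕ) (hN : 1 ≤ N) (ε : ℝ) (hε : 0 < ε)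
    (hNε : 4 ≤ (1 + ε) * N)
    (p : Fin N → ℝ) (hp : ∀ i, 0 ≤ p i) (hsum : ∑ i, p i ≤ 1 + ε) :
    ∑ i, (Real.sqrt (p i) - 1 / Real.sqrt N) ^ 2
      ≤ 2 * (1 - Real.sqrt ((1 + ε) / N) + ε / 2) := by
  have hN0 : (0 : ℝ) < N := by exact_mod_cast hN
  have hsN : 0 < √(N : ℝ) := Real.sqrt_pos.mpr hN0
  set a : ℝ := 1 / √(N : ℝ) with ha
  have ha0 : 0 < a := by positivity
  have hNa : (N : ℝ) * a ^ 2 = 1 := by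
    rw [ha, div_pow, one_pow, Real.sq_sqrt hN0.le]
    field_simp
  have hexpand : ∑ i, (√(p i) - a) ^ 2 = ∑ i, p i - 2 * a * ∑ i, √(p i) + 1 := by
    have h : ∀ i, (√(p i) - a) ^ 2 = p i - 2 * a * √(p i) + a ^ 2 := fun i => by
      linear_combination Real.sq_sqrt (hp i)
    simp [h, sum_add_distrib, sum_sub_distrib, ← mul_sum, hNa]
  have hP0 : 0 ≤ ∑ i, p i := sum_nonneg fun i _ => hp i
  have hS : √(∑ i, p i) ≤ ∑ i, √(p i) := by
    refine Real.sqrt_le_iff.mpr ⟨sum_nonneg fun i _ => Real.sqrt_nonneg _, ?_⟩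
    calc ∑ i, p i = ∑ i, √(p i) ^ 2 := sum_congr rfl fun i _ => (Real.sq_sqrt (hp i)).symm
      _ ≤ (∑ i, √(p i)) ^ 2 := sum_sq_le_sq_sum_of_nonneg fun i _ => Real.sqrt_nonneg _
  have hM : √((1 + ε) / N) = √(1 + ε) * a := by
    rw [Real.sqrt_div (by linarith), ha, mul_one_div]
  have h2a : 2 * a ≤ √(1 + ε) := by
    apply Real.le_sqrt_of_sq_le
    have := mul_le_mul_of_nonneg_right hNε (sq_nonneg a)
    linear_combination this + (1 + ε) * hNa
  have hx : √(∑ i, p i) ≤ √(1 + ε) := Real.sqrt_le_sqrt hsum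
  have hx2 := Real.sq_sqrt hP0
  have hm2 : √(1 + ε) ^ 2 = 1 + ε := Real.sq_sqrt (by linarith)
  have hfac : 0 ≤ (√(1 + ε) - √(∑ i, p i)) * (√(1 + ε) + √(∑ i, p i) - 2 * a) :=
    mul_nonneg (by linarith) (by linarith [Real.sqrt_nonneg (∑ i, p i)])
  have hSa := mul_le_mul_of_nonneg_left hS ha0.le
  rw [hexpand, hM]
  linarith
end

section
/- (Necessary sample size, general form.) Let P, Q be probability measures on a measurable space (X, 𝓕) with P ≪ Q and g := dP/dQ. Let f : ℝ → ℝ be convex with f(1) = 0 and f(0) ≤ f((1+ε)N), where N ≥ 1, ε > 0, δ > 0, and assume f ∘ g is Q-integrable. Suppose that, with strictly positive probability under the N-fold product measure Q^{⊗N} for the samples (v¹,…,v^N), the following two conditions hold simultaneously: (i) (1/N) ∑_{n=1}^N g(v^n) ≤ 1 + ε, and (ii) |∫_X f(g) dQ − (1/N) ∑_{n=1}^N f(g(v^n))| ≤ δ. Then D_f(P‖Q) := ∫_X f(g) dQ ≤ (f((1+ε)N) + (N−1) f(0)) / N + δ. -/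
open MeasureTheory Finset

/-! Positive probability yields at least one sample `v` satisfying both conditions, and the bound
is then deterministic. The values `a n = g (v n)` are nonnegative with sum at most `M = (1+ε)N`,
so each lies in `[0, M]`, where the convex function `f` is below its chord. Summing the chord bounds
gives `∑ f (a n) ≤ N f 0 + (∑ a n / M) (f M - f 0) ≤ f M + (N - 1) f 0`, the last step because
`f 0 ≤ f M` (`sum_le_of_convex`). In other words, among nonnegative weights of bounded total,
`∑ f` is largest when all the mass sits on one sample. -/

/-- A convex function with `f 0 ≤ f M`, summed over nonnegative points of total at most `M`, is at
most its value when one point carries the whole mass `M` and the others vanish. -/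
lemma sum_le_of_convex {f : ℝ → ℝ} (hf : ConvexOn ℝ Set.univ f) {N : ℕ} {M : ℝ} (hM : 0 < M)
    (hf0 : f 0 ≤ f M) (a : Fin N → ℝ) (ha : ∀ n, 0 ≤ a n) (hsum : ∑ n, a n ≤ M) :
    ∑ n, f (a n) ≤ f M + ((N : ℝ) - 1) * f 0 := by
  have chord : ∀ n, f (a n) ≤ f 0 + a n * ((f M - f 0) / M) := by
    intro n
    have hle : a n ≤ M :=
      (Finset.single_le_sum (fun i _ => ha i) (Finset.mem_univ n)).trans hsum
    have h := hf.2 (Set.mem_univ 0) (Set.mem_univ M)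
      (sub_nonneg.2 ((div_le_one hM).2 hle)) (div_nonneg (ha n) hM.le) (sub_add_cancel 1 _)
    simp only [smul_eq_mul, mul_zero, zero_add, div_mul_cancel₀ _ hM.ne'] at h
    calc f (a n) ≤ (1 - a n / M) * f 0 + a n / M * f M := h
      _ = f 0 + a n * ((f M - f 0) / M) := by ring
  have hslope : (∑ n, a n) * ((f M - f 0) / M) ≤ f M - f 0 := by
    calc (∑ n, a n) * ((f M - f 0) / M) ≤ M * ((f M - f 0) / M) :=
          mul_le_mul_of_nonneg_right hsum (div_nonneg (sub_nonneg.2 hf0) hM.le)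
      _ = f M - f 0 := mul_div_cancel₀ _ hM.ne'
  calc ∑ n, f (a n) ≤ ∑ n, (f 0 + a n * ((f M - f 0) / M)) :=
        Finset.sum_le_sum fun n _ => chord n
    _ = N * f 0 + (∑ n, a n) * ((f M - f 0) / M) := by
        simp [Finset.sum_add_distrib, Finset.sum_mul]
    _ ≤ f M + ((N : ℝ) - 1) * f 0 := by linarith

/-- Necessary sample size, general form: if with positive probability under `Q^{⊗N}` the
importance sampling total weight is at most `1+ε` and the Monte Carlo approximation of
`Q(f∘g)` is within `δ` of `Q(f∘g)`, then `D_f(P‖Q) ≤ U_f(N,ε) + δ`. -/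
theorem necessary_sample_size_general {X : Type*} [MeasurableSpace X]
    (P Q : Measure X) [IsProbabilityMeasure P] [IsProbabilityMeasure Q]
    (hPQ : P ≪ Q) (g : X → ℝ) (hg : g = fun x => (P.rnDeriv Q x).toReal)
    (f : ℝ → ℝ) (hf : ConvexOn ℝ Set.univ f) (hf1 : f 1 = 0)
    (N : ℕ) (hN : 1 ≤ N) (ε δ : ℝ) (hε : 0 < ε) (hδ : 0 < δ)
    (hf0 : f 0 ≤ f ((1 + ε) * N))
    (hint : Integrable (fun x => f (g x)) Q)
    (hpos : 0 < (Measure.pi fun _ : Fin N => Q)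
      {v | (1 / (N : ℝ)) * ∑ n, g (v n) ≤ 1 + ε ∧
        |(∫ x, f (g x) ∂Q) - (1 / (N : ℝ)) * ∑ n, f (g (v n))| ≤ δ}) :
    (∫ x, f (g x) ∂Q) ≤ (f ((1 + ε) * N) + ((N : ℝ) - 1) * f 0) / N + δ := by
  obtain ⟨v, hv1, hv2⟩ := nonempty_of_measure_ne_zero hpos.ne'
  have hN0 : (0 : ℝ) < N := by exact_mod_cast hN
  have hg0 : ∀ x, 0 ≤ g x := fun x => by simp [hg]
  rw [one_div_mul_eq_div] at hv1 hv2
  have hsum := sum_le_of_convex hf (by positivity : 0 < (1 + ε) * N) hf0 (fun n => g (v n))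
    (fun n => hg0 _) ((div_le_iff₀ hN0).1 hv1)
  have hmean := div_le_div_of_nonneg_right hsum hN0.le
  linarith [(abs_le.1 hv2).2]
end

section
/- (Necessary sample size for Kullback–Leibler.) Let P, Q be probability measures on (X, 𝓕) with P ≪ Q and g := dP/dQ, and assume D_KL := ∫_X g log g dQ is finite. Let ε, δ > 0 and N ≥ 1. If N < (1+ε)^{-1} exp((D_KL − δ)/(1+ε)), then, with probability at least 1/2 under Q^{⊗N}, either (1/N) ∑_{n=1}^N g(v^n) − 1 > ε, or |(1/N) ∑_{n=1}^N g(v^n) log g(v^n) − D_KL| > δ. -/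
/-!
The alternative holds for *every* sample `v`, so the event has probability one. Put `M = N (1 + ε)`
and `D = ∫ g log g ∂Q`. The smallness assumption says `(1 + ε) log M < D - δ`. If
`∑ g (v n) ≤ M`, then each of the nonnegative weights satisfies `g (v n) ≤ M`, and hence
`∑ g (v n) log g (v n) ≤ log M * ∑ g (v n) ≤ M log M < N (D - δ)`,
so the estimate of `D` falls short by more than `δ`.
-/

/-- Holds with the convention `0 * log 0 = 0`, since `log M ≥ 0`. -/
lemma sum_mul_log_le {ι : Type*} [Fintype ι] (a : ι → ℝ) (ha : ∀ i, 0 ≤ a i) (M : ℝ)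
    (hM : 1 ≤ M) (hsum : ∑ i, a i ≤ M) :
    ∑ i, a i * Real.log (a i) ≤ M * Real.log M := by
  have hlog : 0 ≤ Real.log M := Real.log_nonneg hM
  calc ∑ i, a i * Real.log (a i) ≤ ∑ i, a i * Real.log M := by
        refine Finset.sum_le_sum fun i _ => ?_
        rcases (ha i).eq_or_lt with h | h
        · simp [← h]
        · have hi : a i ≤ M :=
            (Finset.single_le_sum (fun j _ => ha j) (Finset.mem_univ i)).trans hsum
          exact mul_le_mul_of_nonneg_left (Real.log_le_log h hi) h.le
    _ = (∑ i, a i) * Real.log M := by rw [Finset.sum_mul]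
    _ ≤ M * Real.log M := mul_le_mul_of_nonneg_right hsum hlog


open MeasureTheory Finset

/-- Necessary sample size for Kullback–Leibler: if `N < (1+ε)⁻¹ exp((D_KL − δ)/(1+ε))`,
then with probability at least `1/2` under `Q^{⊗N}` either the total importance sampling
weight exceeds `1+ε` by more than `ε` (i.e. `π^N(1) − 1 > ε`) or the importance sampling
estimate of `P(log g)` errs by more than `δ`. -/
theorem necessary_sample_size_KL {X : Type*} [MeasurableSpace X]
    (P Q : Measure X) [IsProbabilityMeasure P] [IsProbabilityMeasure Q]
    (hPQ : P ≪ Q) (g : X → ℝ) (hg : g = fun x => (P.rnDeriv Q x).toReal)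
    (hint : Integrable (fun x => g x * Real.log (g x)) Q)
    (N : ℕ) (hN : 1 ≤ N) (ε δ : ℝ) (hε : 0 < ε) (hδ : 0 < δ)
    (hsmall : (N : ℝ) < (1 + ε)⁻¹ *
      Real.exp (((∫ x, g x * Real.log (g x) ∂Q) - δ) / (1 + ε))) :
    1 / 2 ≤ (Measure.pi fun _ : Fin N => Q)
      {v | (1 / (N : ℝ)) * ∑ n, g (v n) - 1 > ε ∨
        |(1 / (N : ℝ)) * ∑ n, g (v n) * Real.log (g (v n)) -
          ∫ x, g x * Real.log (g x) ∂Q| > δ} := by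
  have hN1 : (1 : ℝ) ≤ N := by exact_mod_cast hN
  have hN0 : (0 : ℝ) < N := by linarith
  have hε1 : 0 < 1 + ε := by linarith
  set D := ∫ x, g x * Real.log (g x) ∂Q with hD
  have hM1 : 1 ≤ (N : ℝ) * (1 + ε) := by nlinarith
  have hlog : (1 + ε) * Real.log (N * (1 + ε)) < D - δ := by
    have h1 : (N : ℝ) * (1 + ε) < Real.exp ((D - δ) / (1 + ε)) := by
      rwa [← div_eq_inv_mul, lt_div_iff₀ hε1] at hsmall
    have h2 := (Real.log_lt_iff_lt_exp (by linarith)).2 h1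
    rwa [lt_div_iff₀ hε1, mul_comm] at h2
  have huniv : {v : Fin N → X | (1 / (N : ℝ)) * ∑ n, g (v n) - 1 > ε ∨
      |(1 / (N : ℝ)) * ∑ n, g (v n) * Real.log (g (v n)) - D| > δ} = Set.univ := by
    refine Set.eq_univ_of_forall fun v => ?_
    refine or_iff_not_imp_left.2 fun hv => ?_
    have hsum : ∑ n, g (v n) ≤ N * (1 + ε) := by
      have h1 : (∑ n, g (v n)) / N ≤ 1 + ε := by
        rw [div_eq_inv_mul, ← one_div]
        linarith [not_lt.1 hv]
      rwa [div_le_iff₀ hN0, mul_comm] at h1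
    have hle := sum_mul_log_le (fun n => g (v n))
      (fun n => by rw [hg]; exact ENNReal.toReal_nonneg) _ hM1 hsum
    have hlt : (1 / (N : ℝ)) * ∑ n, g (v n) * Real.log (g (v n)) < D - δ := by
      rw [one_div, ← div_eq_inv_mul, div_lt_iff₀ hN0]
      nlinarith
    exact lt_abs.2 (Or.inr (by linarith))
  rw [huniv, measure_univ]
  norm_num
end

section
/- (Necessary sample size for total variation.) Let P, Q be probability measures on (X, 𝓕) with P ≪ Q and g := dP/dQ, and set D_TV := (1/2) ∫_X |g − 1| dQ. Let ε, δ > 0 and N ≥ 1 with (1+ε)N ≥ 2. If N < (1 + ε/2 + δ − D_TV)^{-1}, then, with probability at least 1/2 under Q^{⊗N}, either (1/N) ∑_{n=1}^N g(v^n) − 1 > ε, or |(1/(2N)) ∑_{n=1}^N |g(v^n) − 1| − D_TV| > δ. -/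
open MeasureTheory Finset

/-!
The event in question is all of `X^N`, because `g ≥ 0`. Write `M = (1 + ε) N` and suppose
`π^N(1) ≤ 1 + ε`, i.e. `∑ g(vⁿ) ≤ M`. Then every `g(vⁿ)` lies in `[0, M]`, where the convex
function `|x - 1|` is below the chord `1 + x (M - 2) / M`; its end values are `1` and
`M - 1 ≥ 1`, so the chord is nondecreasing. Summing, `∑ |g(vⁿ) - 1| ≤ N + M - 2`, hence the Monte Carlo
approximation is at most `1 + ε / 2 - 1 / N`. The bound on `N` says precisely that this is less
than `D_TV - δ`.
-/

/-- The convex function `|x - 1|` lies below the chord joining its points over `0` and `M`. -/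
lemma abs_sub_one_le_chord {M x : ℝ} (hM : 2 ≤ M) (hx : 0 ≤ x) (hxM : x ≤ M) :
    |x - 1| ≤ 1 + x * ((M - 2) / M) := by
  have hM0 : 0 < M := by linarith
  have h1 : x / M ≤ 1 := (div_le_one hM0).2 hxM
  have h3 : x / M ≤ x := div_le_self hx (by linarith)
  have h2 : x * ((M - 2) / M) = x - 2 * (x / M) := by field_simp
  rw [h2, abs_le]
  constructor <;> linarith

/-- A finite sum of nonnegative reals bounded by `M ≥ 2` gives a sum of `|· - 1|` no larger than
when one term is `M` and all others vanish. -/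
lemma sum_abs_sub_one_le {N : ℕ} {M : ℝ} (hM : 2 ≤ M) (a : Fin N → ℝ) (ha : ∀ n, 0 ≤ a n)
    (hsum : ∑ n, a n ≤ M) : ∑ n, |a n - 1| ≤ N + (M - 2) := by
  have hM0 : 0 < M := by linarith
  calc ∑ n, |a n - 1| ≤ ∑ n, (1 + a n * ((M - 2) / M)) :=
        sum_le_sum fun n _ => abs_sub_one_le_chord hM (ha n)
          ((single_le_sum (fun i _ => ha i) (mem_univ n)).trans hsum)
    _ = N + (∑ n, a n) * ((M - 2) / M) := by simp [sum_add_distrib, sum_mul]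
    _ ≤ N + M * ((M - 2) / M) := by
        have : 0 ≤ (M - 2) / M := div_nonneg (by linarith) hM0.le
        gcongr
    _ = N + (M - 2) := by rw [mul_div_cancel₀ _ hM0.ne']

/-- Necessary sample size for total variation: if `N < (1 + ε/2 + δ − D_TV)⁻¹`, then with
probability at least `1/2` under `Q^{⊗N}` either `π^N(1) − 1 > ε` or the Monte Carlo
approximation `Q_MC^N(|g−1|/2)` of `D_TV` errs by more than `δ`. -/
theorem necessary_sample_size_TV {X : Type*} [MeasurableSpace X]
    (P Q : Measure X) [IsProbabilityMeasure P] [IsProbabilityMeasure Q]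
    (hPQ : P ≪ Q) (g : X → ℝ) (hg : g = fun x => (P.rnDeriv Q x).toReal)
    (N : ℕ) (hN : 1 ≤ N) (ε δ : ℝ) (hε : 0 < ε) (hδ : 0 < δ)
    (hNε : 2 ≤ (1 + ε) * N)
    (hsmall : (N : ℝ) < (1 + ε / 2 + δ - (1 / 2) * ∫ x, |g x - 1| ∂Q)⁻¹) :
    1 / 2 ≤ (Measure.pi fun _ : Fin N => Q)
      {v | (1 / (N : ℝ)) * ∑ n, g (v n) - 1 > ε ∨
        |(1 / (2 * (N : ℝ))) * ∑ n, |g (v n) - 1| -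
          (1 / 2) * ∫ x, |g x - 1| ∂Q| > δ} := by
  have hN0 : (0 : ℝ) < N := by exact_mod_cast hN
  set D := (1 / 2) * ∫ x, |g x - 1| ∂Q
  have hg0 : ∀ x, 0 ≤ g x := fun x => by rw [hg]; exact ENNReal.toReal_nonneg
  -- Positivity of `1 + ε/2 + δ - D` follows from `0 < N < (1 + ε/2 + δ - D)⁻¹`.
  have ht : 1 + ε / 2 + δ - D < (N : ℝ)⁻¹ :=
    (lt_inv_comm₀ hN0 (inv_pos.1 (hN0.trans hsmall))).1 hsmall
  have huniv : {v : Fin N → X | (1 / (N : ℝ)) * ∑ n, g (v n) - 1 > ε ∨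
      |(1 / (2 * (N : ℝ))) * ∑ n, |g (v n) - 1| - D| > δ} = Set.univ := by
    refine Set.eq_univ_of_forall fun v => or_iff_not_imp_left.2 fun h => ?_
    have hsum : ∑ n, g (v n) ≤ (1 + ε) * N := by
      have h' : (∑ n, g (v n)) / N ≤ 1 + ε := by
        rw [not_lt, one_div_mul_eq_div] at h
        linarith
      exact (div_le_iff₀ hN0).1 h'
    have hMC : (1 / (2 * (N : ℝ))) * ∑ n, |g (v n) - 1| ≤ 1 + ε / 2 - (N : ℝ)⁻¹ := by
      calc (1 / (2 * (N : ℝ))) * ∑ n, |g (v n) - 1|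
          ≤ (1 / (2 * (N : ℝ))) * (N + ((1 + ε) * N - 2)) := by
            gcongr
            exact sum_abs_sub_one_le hNε (fun n => g (v n)) (fun n => hg0 _) hsum
        _ = 1 + ε / 2 - (N : ℝ)⁻¹ := by field_simp; ring
    exact lt_abs.2 (Or.inr (by linarith))
  rw [huniv, measure_univ]
  simp
end

section
/- (Necessary sample size for Hellinger.) Let P, Q be probability measures on (X, 𝓕) with P ≪ Q and g := dP/dQ, and set D_Hell² := ∫_X (√g − 1)² dQ. Let ε, δ > 0 and N ≥ 1 with (1+ε)N ≥ 4. If N < 4(1+ε) (2 + ε + δ − D_Hell²)^{-2}, then, with probability at least 1/2 under Q^{⊗N}, either (1/N) ∑_{n=1}^N g(v^n) − 1 > ε, or |(1/N) ∑_{n=1}^N (√(g(v^n)) − 1)² − D_Hell²| > δ. -/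
open MeasureTheory Finset

/-!
The event is the whole sample space, so its probability is `1`. Suppose a sample has total weight
`p = π^N(1) ≤ 1 + ε` and put `s = √((1+ε)N)`. Every `g(vⁿ)` is at most `∑ g(vᵏ) ≤ (1+ε)N = s²`,
so `g(vⁿ) ≤ s √(g(vⁿ))`, and averaging gives `p ≤ s q` with `q` the mean of the `√(g(vⁿ))`.
As the mean of `(√(g(vⁿ)) − 1)²` is `p + 1 − 2q`, a Monte Carlo error of at most `δ` would give
`t := 2 + ε + δ − D_Hell² ≥ (1 + ε − p) + 2q`. Since `s ≥ 2`, this yields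
`s t ≥ 2(1 + ε − p) + 2p = 2(1 + ε)`, that is `N t² ≥ 4(1 + ε)`, contrary to the bound on `N`.
-/

/-- The deterministic core: for nonnegative values `a` with mean at most `1 + ε`, if the mean of
`(√a − 1)²` is at least `D − δ`, then `N` is at least the critical sample size. -/
lemma sample_size_lower_bound {N : ℕ} (hN : 1 ≤ N) {ε δ D : ℝ} (hε : 0 < ε)
    (hNε : 4 ≤ (1 + ε) * N) (a : Fin N → ℝ) (ha : ∀ n, 0 ≤ a n)
    (hmean : (1 / (N : ℝ)) * ∑ n, a n ≤ 1 + ε)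
    (hMC : D - δ ≤ (1 / (N : ℝ)) * ∑ n, (Real.sqrt (a n) - 1) ^ 2) :
    4 * (1 + ε) ≤ N * (2 + ε + δ - D) ^ 2 := by
  have hN0 : (0 : ℝ) < N := by exact_mod_cast hN
  obtain ⟨s, hs2, hs⟩ : ∃ s : ℝ, 2 ≤ s ∧ s ^ 2 = (1 + ε) * N :=
    ⟨√((1 + ε) * N), Real.le_sqrt_of_sq_le (by linarith), Real.sq_sqrt (by linarith)⟩
  have hsum : ∑ n, a n ≤ s ^ 2 := by
    rw [hs]
    rwa [one_div, inv_mul_le_iff₀ hN0, mul_comm] at hmean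
  have ha_le (n : Fin N) : a n ≤ s * √(a n) := by
    have h1 : a n ≤ s ^ 2 :=
      (Finset.single_le_sum (fun i _ => ha i) (Finset.mem_univ n)).trans hsum
    have h2 : √(a n) ≤ s := Real.sqrt_le_iff.2 ⟨by linarith, h1⟩
    calc a n = √(a n) * √(a n) := (Real.mul_self_sqrt (ha n)).symm
      _ ≤ s * √(a n) := mul_le_mul_of_nonneg_right h2 (Real.sqrt_nonneg _)
  set p := (1 / (N : ℝ)) * ∑ n, a n with hp
  set q := (1 / (N : ℝ)) * ∑ n, √(a n) with hq
  have hpq : p ≤ s * q := by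
    rw [hp, hq, mul_left_comm, Finset.mul_sum Finset.univ _ s]
    exact mul_le_mul_of_nonneg_left (Finset.sum_le_sum fun n _ => ha_le n) (by positivity)
  have hMC_eq : (1 / (N : ℝ)) * ∑ n, (√(a n) - 1) ^ 2 = p + 1 - 2 * q := by
    have h (n : Fin N) : (√(a n) - 1) ^ 2 = a n + 1 - 2 * √(a n) := by
      linear_combination Real.sq_sqrt (ha n)
    simp only [h, Finset.sum_sub_distrib, Finset.sum_add_distrib, ← Finset.mul_sum, hp, hq]
    simp
    field_simp
  rw [hMC_eq] at hMC
  have hst : 2 * (1 + ε) ≤ s * (2 + ε + δ - D) :=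
    calc 2 * (1 + ε) ≤ s * (1 + ε - p + 2 * q) := by
          nlinarith [mul_nonneg (sub_nonneg.2 hs2) (sub_nonneg.2 hmean)]
      _ ≤ s * (2 + ε + δ - D) := mul_le_mul_of_nonneg_left (by linarith) (by linarith)
  -- Squaring `hst` gives the goal multiplied by `1 + ε`.
  have hsq := pow_le_pow_left₀ (by linarith) hst 2
  rw [mul_pow s, hs] at hsq
  exact le_of_mul_le_mul_left (by linarith) (by linarith : 0 < 1 + ε)

/-- Necessary sample size for Hellinger: if `N < 4(1+ε)(2 + ε + δ − D_Hell²)⁻²`, then with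
probability at least `1/2` under `Q^{⊗N}` either `π^N(1) − 1 > ε` or the Monte Carlo
approximation `Q_MC^N((√g − 1)²)` of `D_Hell²` errs by more than `δ`. -/
theorem necessary_sample_size_Hellinger {X : Type*} [MeasurableSpace X]
    (P Q : Measure X) [IsProbabilityMeasure P] [IsProbabilityMeasure Q]
    (hPQ : P ≪ Q) (g : X → ℝ) (hg : g = fun x => (P.rnDeriv Q x).toReal)
    (N : ℕ) (hN : 1 ≤ N) (ε δ : ℝ) (hε : 0 < ε) (hδ : 0 < δ)
    (hNε : 4 ≤ (1 + ε) * N)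
    (hsmall : (N : ℝ) < 4 * (1 + ε) *
      ((2 + ε + δ - ∫ x, (Real.sqrt (g x) - 1) ^ 2 ∂Q) ^ 2)⁻¹) :
    1 / 2 ≤ (Measure.pi fun _ : Fin N => Q)
      {v | (1 / (N : ℝ)) * ∑ n, g (v n) - 1 > ε ∨
        |(1 / (N : ℝ)) * ∑ n, (Real.sqrt (g (v n)) - 1) ^ 2 -
          ∫ x, (Real.sqrt (g x) - 1) ^ 2 ∂Q| > δ} := by
  have hD := hsmall
  generalize ∫ x, (Real.sqrt (g x) - 1) ^ 2 ∂Q = D at hD ⊢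
  have hg0 (x : X) : 0 ≤ g x := by rw [hg]; exact ENNReal.toReal_nonneg
  have hN0 : (0 : ℝ) < N := by exact_mod_cast hN
  -- `hD` clears its denominator unless `2 + ε + δ - D = 0`, where the claim reads `0 < 4 * (1 + ε)`.
  have hlt : N * (2 + ε + δ - D) ^ 2 < 4 * (1 + ε) := by
    rcases (sq_nonneg (2 + ε + δ - D)).eq_or_lt with h | h
    · rw [← h]; linarith
    · rwa [← div_eq_mul_inv, lt_div_iff₀ h] at hD
  suffices h : {v : Fin N → X | (1 / (N : ℝ)) * ∑ n, g (v n) - 1 > ε ∨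
      |(1 / (N : ℝ)) * ∑ n, (Real.sqrt (g (v n)) - 1) ^ 2 - D| > δ} = Set.univ by
    rw [h, measure_univ]
    simp
  refine Set.eq_univ_of_forall fun v => ?_
  by_contra hv
  simp only [Set.mem_ofPred_eq, not_or, not_lt, gt_iff_lt] at hv
  have hMC := (abs_le.1 hv.2).1
  exact hlt.not_ge (sample_size_lower_bound hN hε hNε (fun n => g (v n)) (fun n => hg0 _)
    (by linarith [hv.1]) (by linarith))
end

section
/- Let P, Q be probability measures on (X, 𝓕) with P ≪ Q and g := dP/dQ square-integrable with respect to Q, let C > 0 and N ≥ 1, and suppose the mean squared error bound (∫_X g² dQ − 1)/N ≤ C holds. Then N ≥ 4 C^{-1} D_TV(P, Q)², where D_TV(P, Q) := (1/2) ∫_X |g − 1| dQ. -/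
/-!
Since `∫ g dQ = P(X) = 1`, the χ² divergence `∫ g² dQ - 1` equals `∫ (g - 1)² dQ`, and by
Cauchy-Schwarz on the probability space `(X, Q)` this is at least `(∫ |g - 1| dQ)²`, which is
`4 D_TV(P, Q)²`. The assumed bound says that the χ² divergence is at most `C N`.
-/

open MeasureTheory

/-- Cauchy-Schwarz against the constant function `1`, in the form `Var f ≥ 0`. -/
lemma sq_integral_le_integral_sq {X : Type*} [MeasurableSpace X] (Q : Measure X)
    [IsProbabilityMeasure Q] {f : X → ℝ} (hf : Integrable f Q)
    (hf2 : Integrable (fun x => f x ^ 2) Q) :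
    (∫ x, f x ∂Q) ^ 2 ≤ ∫ x, f x ^ 2 ∂Q := by
  set m := ∫ x, f x ∂Q with hm
  have h0 : 0 ≤ ∫ x, (f x - m) ^ 2 ∂Q := integral_nonneg fun x => sq_nonneg _
  have h1 : ∫ x, (f x - m) ^ 2 ∂Q = ∫ x, (f x ^ 2 - 2 * m * f x + m ^ 2) ∂Q := by
    congr 1; ext x; ring
  have hd : Integrable (fun x => f x ^ 2 - 2 * m * f x) Q := hf2.sub (hf.const_mul _)
  rw [h1, integral_add hd (integrable_const _), integral_sub hf2 (hf.const_mul _),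
    integral_const_mul, ← hm, integral_const] at h0
  simp only [probReal_univ, one_smul] at h0
  nlinarith

/-- If the mean squared error `(∫ g² dQ − 1)/N` of the importance sampling estimator of
`P(1)` is at most `C`, then `N ≥ 4C⁻¹ D_TV(P,Q)²`,
where `D_TV(P,Q) = (1/2) ∫ |g − 1| dQ`. -/
theorem necessary_sample_size_mse_TV {X : Type*} [MeasurableSpace X]
    (P Q : Measure X) [IsProbabilityMeasure P] [IsProbabilityMeasure Q]
    (hPQ : P ≪ Q) (g : X → ℝ) (hg : g = fun x => (P.rnDeriv Q x).toReal)
    (hint : Integrable (fun x => g x ^ 2) Q)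
    (C : ℝ) (hC : 0 < C) (N : ℕ) (hN : 1 ≤ N)
    (hmse : ((∫ x, g x ^ 2 ∂Q) - 1) / N ≤ C) :
    (N : ℝ) ≥ 4 * C⁻¹ * ((1 / 2) * ∫ x, |g x - 1| ∂Q) ^ 2 := by
  have hgi : Integrable g Q := by rw [hg]; exact Measure.integrable_toReal_rnDeriv
  have hg1 : ∫ x, g x ∂Q = 1 := by
    rw [hg, Measure.integral_toReal_rnDeriv hPQ, probReal_univ]
  have hexp : (fun x => |g x - 1| ^ 2) = fun x => g x ^ 2 - 2 * g x + 1 := by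
    ext x; rw [sq_abs]; ring
  have hd : Integrable (fun x => g x ^ 2 - 2 * g x) Q := hint.sub (hgi.const_mul 2)
  have hchi : ∫ x, |g x - 1| ^ 2 ∂Q = (∫ x, g x ^ 2 ∂Q) - 1 := by
    rw [hexp, integral_add hd (integrable_const _), integral_sub hint (hgi.const_mul 2),
      integral_const_mul, hg1, integral_const, probReal_univ, one_smul]
    ring
  have hcs := sq_integral_le_integral_sq Q (hgi.sub (integrable_const (1 : ℝ))).abs
    (by
      change Integrable (fun x => |g x - 1| ^ 2) Q
      rw [hexp]
      exact hd.add (integrable_const _))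
  change (∫ x, |g x - 1| ∂Q) ^ 2 ≤ ∫ x, |g x - 1| ^ 2 ∂Q at hcs
  rw [hchi] at hcs
  have hN' : (0 : ℝ) < N := by exact_mod_cast hN
  rw [div_le_iff₀ hN'] at hmse
  calc 4 * C⁻¹ * ((1 / 2) * ∫ x, |g x - 1| ∂Q) ^ 2
      = (∫ x, |g x - 1| ∂Q) ^ 2 / C := by ring
    _ ≤ (N : ℝ) := by
      rw [div_le_iff₀ hC]
      linarith
end

section
/- Let P, Q be probability measures on (X, 𝓕) with P ≪ Q and g := dP/dQ square-integrable with respect to Q, let C > 0 and N ≥ 1, and suppose the mean squared error bound (∫_X g² dQ − 1)/N ≤ C holds. Then N ≥ C^{-1} D_Hell(P, Q)², where D_Hell(P, Q)² := ∫_X (√g − 1)² dQ. -/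
/-!
The squared Hellinger distance is at most the χ² divergence: since `t - 1 = (√t - 1)(√t + 1)` and
`√t + 1 ≥ 1`, one has `(√t - 1)² ≤ (t - 1)²` for `t ≥ 0` (`sq_sqrt_sub_one_le`). Taking `t = g x`
and integrating, `∫ g dQ = P(X) = 1` (this uses `P ≪ Q`) turns the right-hand side into
`∫ g² dQ - 1`, which the mean squared error bound controls by `C N`.
-/

open MeasureTheory

theorem sq_sqrt_sub_one_le {t : ℝ} (ht : 0 ≤ t) : (Real.sqrt t - 1) ^ 2 ≤ (t - 1) ^ 2 := by
  have hs := Real.sqrt_nonneg t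
  have hfac : t - 1 = (Real.sqrt t - 1) * (Real.sqrt t + 1) := by
    linear_combination -Real.sq_sqrt ht
  rw [hfac, mul_pow]
  exact le_mul_of_one_le_right (sq_nonneg _) (one_le_pow₀ (by linarith))

/-- If the mean squared error `(∫ g² dQ − 1)/N` of the importance sampling estimator of
`P(1)` is at most `C`, then `N ≥ C⁻¹ D_Hell(P,Q)²`,
where `D_Hell(P,Q)² = ∫ (√g − 1)² dQ`. -/
theorem necessary_sample_size_mse_Hellinger {X : Type*} [MeasurableSpace X]
    (P Q : Measure X) [IsProbabilityMeasure P] [IsProbabilityMeasure Q]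
    (hPQ : P ≪ Q) (g : X → ℝ) (hg : g = fun x => (P.rnDeriv Q x).toReal)
    (hint : Integrable (fun x => g x ^ 2) Q)
    (C : ℝ) (hC : 0 < C) (N : ℕ) (hN : 1 ≤ N)
    (hmse : ((∫ x, g x ^ 2 ∂Q) - 1) / N ≤ C) :
    (N : ℝ) ≥ C⁻¹ * ∫ x, (Real.sqrt (g x) - 1) ^ 2 ∂Q := by
  have hg0 : ∀ x, 0 ≤ g x := fun x => by rw [hg]; exact ENNReal.toReal_nonneg
  have hgi : Integrable g Q := by rw [hg]; exact Measure.integrable_toReal_rnDeriv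
  have hg1 : ∫ x, g x ∂Q = 1 := by
    rw [hg, Measure.integral_toReal_rnDeriv hPQ]; simp
  have hlin : Integrable (fun x => 2 * g x) Q := hgi.const_mul 2
  have hdiff : Integrable (fun x => g x ^ 2 - 2 * g x) Q := hint.sub hlin
  have hbound : ∫ x, (Real.sqrt (g x) - 1) ^ 2 ∂Q ≤ (∫ x, g x ^ 2 ∂Q) - 1 := by
    calc ∫ x, (Real.sqrt (g x) - 1) ^ 2 ∂Q
        ≤ ∫ x, (g x ^ 2 - 2 * g x + 1) ∂Q := by
          refine integral_mono_of_nonneg (Filter.Eventually.of_forall fun x => sq_nonneg _)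
            (hdiff.add (integrable_const 1)) (Filter.Eventually.of_forall fun x => ?_)
          exact (sq_sqrt_sub_one_le (hg0 x)).trans_eq (by ring)
      _ = (∫ x, g x ^ 2 ∂Q) - 1 := by
          rw [integral_add hdiff (integrable_const 1), integral_sub hint hlin,
            integral_const_mul, hg1]
          simp
          ring
  have hN0 : (0 : ℝ) < N := by exact_mod_cast hN
  rw [div_le_iff₀ hN0] at hmse
  rw [ge_iff_le, inv_mul_le_iff₀ hC]
  exact hbound.trans hmse
end

section
/- Let σ > 0 and let g : ℝ → ℝ be the Radon–Nikodym derivative of the centered Gaussian measure N(0, σ²) with respect to the standard Gaussian measure N(0, 1) on ℝ, i.e. g(x) = σ^{-1} exp(x²/2 − x²/(2σ²)). Then for every real α > 1, the function g^α is integrable with respect to N(0, 1) if and only if σ² < α/(α − 1). In particular, the χ² divergence D_χ²(N(0,σ²) ‖ N(0,1)) = ∫ g² dN(0,1) − 1 is finite if and only if σ² < 2. -/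
/-!
Multiplying `g ^ α` by the density of `N(0, 1)` gives a positive constant times `exp (-b x²)` with
`b = (1 - α + α / σ²) / 2`. By `integrable_exp_neg_mul_sq_iff` this is Lebesgue integrable iff
`0 < b`, which for `α > 1` rearranges to `σ² < α / (α - 1)`. The claim on `g ^ 2` is the case
`α = 2`.
-/

open MeasureTheory ProbabilityTheory

lemma integrable_rpow_gaussian_ratio_iff (σ : ℝ) (hσ : 0 < σ) (α : ℝ) (hα : 1 < α) :
    Integrable (fun x : ℝ => (σ⁻¹ * Real.exp (x ^ 2 / 2 - x ^ 2 / (2 * σ ^ 2))) ^ α)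
      (gaussianReal 0 1) ↔ σ ^ 2 < α / (α - 1) := by
  have hprod : (fun x : ℝ => (gaussianPDF 0 1 x).toReal •
      (σ⁻¹ * Real.exp (x ^ 2 / 2 - x ^ 2 / (2 * σ ^ 2))) ^ α) =
      fun x => ((√(2 * Real.pi))⁻¹ * σ⁻¹ ^ α) *
        Real.exp (-((1 - α + α / σ ^ 2) / 2) * x ^ 2) := by
    funext x
    rw [toReal_gaussianPDF, gaussianPDFReal_def, Real.mul_rpow (by positivity) (by positivity),
      ← Real.exp_mul, smul_eq_mul]
    simp only [NNReal.coe_one, mul_one, sub_zero]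
    rw [mul_mul_mul_comm, ← Real.exp_add]
    congr 2
    field_simp
    ring
  have hc : ((√(2 * Real.pi))⁻¹ * σ⁻¹ ^ α) ≠ 0 := by positivity
  rw [gaussianReal_of_var_ne_zero 0 one_ne_zero,
    integrable_withDensity_iff_integrable_smul' (measurable_gaussianPDF 0 1)
      (Filter.Eventually.of_forall fun _ => gaussianPDF_lt_top),
    hprod, integrable_const_mul_iff hc.isUnit, integrable_exp_neg_mul_sq_iff]
  have hs : 0 < σ ^ 2 := by positivity
  have hb : (1 - α + α / σ ^ 2) / 2 = (α - σ ^ 2 * (α - 1)) / (2 * σ ^ 2) := by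
    field_simp
    ring
  rw [hb, div_pos_iff_of_pos_right (by positivity), sub_pos, lt_div_iff₀ (by linarith)]

/-- Integrability of powers of the density `g = dN(0,σ²)/dN(0,1)`,
`g(x) = σ⁻¹ exp(x²/2 − x²/(2σ²))`: for `α > 1`, `g^α` is integrable with respect to the
standard Gaussian iff `σ² < α/(α−1)`; in particular the χ² divergence
`D_χ²(N(0,σ²)‖N(0,1)) = ∫ g² dN(0,1) − 1` is finite iff `σ² < 2`. -/
theorem gaussian_density_power_integrable_iff (σ : ℝ) (hσ : 0 < σ)
    (g : ℝ → ℝ) (hg : g = fun x => σ⁻¹ * Real.exp (x ^ 2 / 2 - x ^ 2 / (2 * σ ^ 2))) :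
    (∀ α : ℝ, 1 < α →
      (Integrable (fun x => g x ^ α) (gaussianReal 0 1) ↔ σ ^ 2 < α / (α - 1))) ∧
    (Integrable (fun x => g x ^ 2) (gaussianReal 0 1) ↔ σ ^ 2 < 2) := by
  subst hg
  refine ⟨integrable_rpow_gaussian_ratio_iff σ hσ, ?_⟩
  have h2 := integrable_rpow_gaussian_ratio_iff σ hσ 2 one_lt_two
  simp only [Real.rpow_two] at h2
  rw [h2]
  norm_num
end
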